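/- Let p ∈ P and s ∈ S be a pair of compatible states with L_p = coL_s. Then the following are equivalent: (I) the states p and s do not match; (II) the state p has a prefix successor compatible with s; (III) the state s has a suffix successor compatible with p; (IV) there is a letter b ∈ A \ L_p such that for any word X with prefix state p and any word Y with suffix state s, the word XbY is in C. -/

import Mathlib

open Filter Asymptotics
open scoped Classical

/-- An embedding order on words over a weighted alphabet. -/
structure EmbeddingOrder (A : Type*) (w : A → ℕ) where
  le : List A → List A → Prop
  le_refl : ∀ W, le W W
  le_trans : ∀ {U V W}, le U V → le V W → le U W
  le_antisymm : ∀ {V W}, le V W → le W V → V = W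
  nil_le : ∀ W, le [] W
  weight_lt : ∀ {W V}, le W V → W ≠ V → (W.map w).sum < (V.map w).sum
  le_iff_factor : ∀ W V, le W V ↔ ∃ Ws : List (List A),
    Ws.length = V.length ∧ Ws.flatten = W ∧ ∀ q ∈ Ws.zip V, le q.1 [q.2]

namespace EmbeddingOrder

variable {A : Type*} {w : A → ℕ} (E : EmbeddingOrder A w) {f : ℕ} (φ : Fin f → List A)

/-- The weight of a word: the sum of the weights of its letters. -/
def wt (w : A → ℕ) (W : List A) : ℕ := (W.map w).sum

/-- The class `C = A* ∩ Av(φ¹,…,φ^f)` of all words avoiding every forbidden word. -/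
def Cset : Set (List A) := {W | ∀ i, ¬ E.le (φ i) W}

/-- The prefix state of `W`: its `i`-th component is the length of the longest prefix
of the forbidden word `φ i` contained in `W`. -/
noncomputable def pstate (W : List A) : Fin f → ℕ := fun i =>
  sSup {p | p ≤ (φ i).length ∧ E.le ((φ i).take p) W}

/-- The suffix state of `W`: its `i`-th component is the length of the longest suffix
of the forbidden word `φ i` contained in `W`. -/
noncomputable def sstate (W : List A) : Fin f → ℕ := fun i =>
  sSup {p | p ≤ (φ i).length ∧ E.le ((φ i).drop ((φ i).length - p)) W}

/-- A prefix state `p` and a suffix state `s` *overlap* if `p i + s i ≥ ℓ_i` for some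
`i` (equivalently, `XY ∉ C` whenever `X` has prefix state `p` and `Y` suffix state `s`);
otherwise they are *compatible*. -/
def POverlap (p s : Fin f → ℕ) : Prop := ∃ i, (φ i).length ≤ p i + s i

/-- The (prefix) loop alphabet of a state `p`: the letters whose appending does not
change the prefix state `p`. -/
def stateLoopP (p : Fin f → ℕ) : Set A :=
  {a | ∀ X : List A, E.pstate φ X = p → E.pstate φ (X ++ [a]) = p}

/-- The suffix loop alphabet of a state `s`: the letters whose prepending does not
change the suffix state `s`. -/
def stateLoopS (s : Fin f → ℕ) : Set A :=
  {a | ∀ Y : List A, E.sstate φ Y = s → E.sstate φ (a :: Y) = s}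

/-- `p'` is a *prefix successor* of `p`: `p' ≠ p` and some letter is a transition
symbol from `p` to `p'`. -/
def PSucc (p p' : Fin f → ℕ) : Prop :=
  p ≠ p' ∧ ∃ b : A, ∀ X : List A, E.pstate φ X = p → E.pstate φ (X ++ [b]) = p'

/-- `s'` is a *suffix successor* of `s`. -/
def SSucc (s s' : Fin f → ℕ) : Prop :=
  s ≠ s' ∧ ∃ b : A, ∀ Y : List A, E.sstate φ Y = s → E.sstate φ (b :: Y) = s'

/-- Compatible states `p` (prefix) and `s` (suffix) *match* if every prefix successor
of `p` overlaps with `s` and every suffix successor of `s` overlaps with `p`. -/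
def Matches (p s : Fin f → ℕ) : Prop :=
  ¬ POverlap φ p s ∧ (∀ p', E.PSucc φ p p' → POverlap φ p' s) ∧
    ∀ s', E.SSucc φ s s' → POverlap φ p s'

/-- `ρ(S)`: the unique positive root of `1 − Σ_{a∈S} x^{weight a}` for a nonempty set
`S` of letters (realised as a supremum). -/
noncomputable def rhoOf (w : A → ℕ) (S : Set A) : ℝ :=
  sSup {x : ℝ | 0 ≤ x ∧ ∑' a : S, x ^ w (a : A) ≤ 1}

/-- The growth rate of `S*`: the reciprocal `ρ(S)⁻¹` of the positive root of
`1 − Σ_{a∈S} x^{weight a}`. -/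
noncomputable def growthOf (w : A → ℕ) (S : Set A) : ℝ := (rhoOf w S)⁻¹

/-- The dominant growth rate `γ` of the class: the largest growth rate of the loop
alphabet of a (reachable) prefix state. -/
noncomputable def gammaC : ℝ :=
  sSup {g : ℝ | ∃ X ∈ E.Cset φ, g = growthOf w (E.stateLoopP φ (E.pstate φ X))}

/-- The number of dominant loop blocks (equivalently, dominant states) in the prefix
decomposition of `W`. -/
noncomputable def domCountP (W : List A) : ℕ :=
  Set.ncard {p : Fin f → ℕ | (∃ j ≤ W.length, E.pstate φ (W.take j) = p) ∧
    growthOf w (E.stateLoopP φ p) = E.gammaC φ}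

/-- The number of dominant loop blocks (equivalently, dominant states) in the suffix
decomposition of `W`. -/
noncomputable def domCountS (W : List A) : ℕ :=
  Set.ncard {s : Fin f → ℕ | (∃ j ≤ W.length, E.sstate φ (W.drop j) = s) ∧
    growthOf w (E.stateLoopS φ s) = E.gammaC φ}

/-- `D`: the largest number of dominant states appearing on a single prefix transition
path of a word of the class. -/
noncomputable def Dmax : ℕ := sSup {d : ℕ | ∃ W ∈ E.Cset φ, E.domCountP φ W = d}

end EmbeddingOrder

open EmbeddingOrder


namespace EmbeddingOrder

variable {A : Type*} {w : A → ℕ} (E : EmbeddingOrder A w) {f : ℕ} (φ : Fin f → List A)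

theorem aux_le_append (W X Y : List A) :
    E.le W (X ++ Y) ↔ ∃ U V, W = U ++ V ∧ E.le U X ∧ E.le V Y := by
  constructor
  · intro h
    obtain ⟨Ws, hl, hfl, hq⟩ := (E.le_iff_factor _ _).1 h
    have hl' : Ws.length = X.length + Y.length := by simpa using hl
    have hlt : (Ws.take X.length).length = X.length := by simp; omega
    have hz : Ws.zip (X ++ Y) = (Ws.take X.length).zip X ++ (Ws.drop X.length).zip Y := by
      conv_lhs => rw [← List.take_append_drop X.length Ws]
      exact List.zip_append hlt
    rw [hz] at hq
    refine ⟨(Ws.take X.length).flatten, (Ws.drop X.length).flatten, ?_, ?_, ?_⟩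
    · rw [← List.flatten_append, List.take_append_drop, hfl]
    · exact (E.le_iff_factor _ _).2 ⟨_, hlt, rfl,
        fun q hm => hq q (List.mem_append_left _ hm)⟩
    · exact (E.le_iff_factor _ _).2 ⟨_, by simp; omega, rfl,
        fun q hm => hq q (List.mem_append_right _ hm)⟩
  · rintro ⟨U, V, rfl, hU, hV⟩
    obtain ⟨Us, hUl, hUf, hUq⟩ := (E.le_iff_factor _ _).1 hU
    obtain ⟨Vs, hVl, hVf, hVq⟩ := (E.le_iff_factor _ _).1 hV
    refine (E.le_iff_factor _ _).2 ⟨Us ++ Vs, by simp [hUl, hVl], by simp [hUf, hVf], ?_⟩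
    intro q hm
    rw [List.zip_append hUl] at hm
    rcases List.mem_append.1 hm with h | h
    · exact hUq q h
    · exact hVq q h

theorem aux_left_le (U V : List A) : E.le U (U ++ V) :=
  (E.aux_le_append _ _ _).2 ⟨U, [], by simp, E.le_refl _, E.nil_le _⟩

theorem aux_right_le (U V : List A) : E.le V (U ++ V) :=
  (E.aux_le_append _ _ _).2 ⟨[], V, by simp, E.nil_le _, E.le_refl _⟩

theorem aux_take_le {W : List A} {j k : ℕ} (h : j ≤ k) : E.le (W.take j) (W.take k) := by
  have h1 : W.take j = (W.take k).take j := by rw [List.take_take, min_eq_left h]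
  have h2 := E.aux_left_le ((W.take k).take j) ((W.take k).drop j)
  rwa [List.take_append_drop, ← h1] at h2

theorem aux_drop_le {W : List A} {j k : ℕ} (h : j ≤ k) : E.le (W.drop k) (W.drop j) := by
  have h1 : W.drop k = (W.drop j).drop (k - j) := by
    rw [List.drop_drop]; congr 1; omega
  have h2 := E.aux_right_le ((W.drop j).take (k - j)) ((W.drop j).drop (k - j))
  rwa [List.take_append_drop, ← h1] at h2

theorem aux_pstate (X : List A) (i : Fin f) {k : ℕ} (hk : k ≤ (φ i).length) :
    E.le ((φ i).take k) X ↔ k ≤ E.pstate φ X i := by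
  have hb : BddAbove {p | p ≤ (φ i).length ∧ E.le ((φ i).take p) X} :=
    ⟨(φ i).length, fun p hp => hp.1⟩
  have hn : {p | p ≤ (φ i).length ∧ E.le ((φ i).take p) X}.Nonempty :=
    ⟨0, by simp, by simpa using E.nil_le X⟩
  constructor
  · intro h
    exact le_csSup hb ⟨hk, h⟩
  · intro h
    exact E.le_trans (E.aux_take_le h) (Nat.sSup_mem hn hb).2

theorem aux_sstate (Y : List A) (i : Fin f) {k : ℕ} (hk : k ≤ (φ i).length) :
    E.le ((φ i).drop k) Y ↔ (φ i).length - k ≤ E.sstate φ Y i := by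
  have hb : BddAbove {p | p ≤ (φ i).length ∧ E.le ((φ i).drop ((φ i).length - p)) Y} :=
    ⟨(φ i).length, fun p hp => hp.1⟩
  have hn : {p | p ≤ (φ i).length ∧ E.le ((φ i).drop ((φ i).length - p)) Y}.Nonempty :=
    ⟨0, by simp, by simpa using E.nil_le Y⟩
  constructor
  · intro h
    refine le_csSup hb ⟨by omega, ?_⟩
    rwa [Nat.sub_sub_self hk]
  · intro h
    have h' : (φ i).length - E.sstate φ Y i ≤ k := by omega
    exact E.le_trans (E.aux_drop_le h') (Nat.sSup_mem hn hb).2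

theorem aux_pstate_le (X : List A) (i : Fin f) : E.pstate φ X i ≤ (φ i).length :=
  csSup_le ⟨0, by simp, by simpa using E.nil_le X⟩ fun _ hp => hp.1

theorem aux_sstate_le (X : List A) (i : Fin f) : E.sstate φ X i ≤ (φ i).length :=
  csSup_le ⟨0, by simp, by simpa using E.nil_le X⟩ fun _ hp => hp.1

theorem aux_mem_iff (X Y : List A) :
    X ++ Y ∈ E.Cset φ ↔ ¬ POverlap φ (E.pstate φ X) (E.sstate φ Y) := by
  unfold POverlap Cset
  simp only [Set.mem_ofPred_eq, ← not_exists, not_iff_not]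
  refine exists_congr fun i => ?_
  rw [E.aux_le_append]
  constructor
  · rintro ⟨U, V, h, hU, hV⟩
    have hlen : (φ i).length = U.length + V.length := by rw [h]; simp
    have h1 : (φ i).take U.length = U := by rw [h]; simp
    have h2 : (φ i).drop U.length = V := by rw [h]; simp
    have hk : U.length ≤ (φ i).length := by omega
    have h3 := (E.aux_pstate φ X i hk).1 (by rwa [h1])
    have h4 := (E.aux_sstate φ Y i hk).1 (by rwa [h2])
    omega
  · intro h
    have hk := E.aux_pstate_le φ X i
    exact ⟨_, _, (List.take_append_drop (E.pstate φ X i) (φ i)).symm,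
      (E.aux_pstate φ X i hk).2 le_rfl, (E.aux_sstate φ Y i hk).2 (by omega)⟩

theorem aux_pstate_append_le {X X' : List A} (Z : List A) (h : E.pstate φ X = E.pstate φ X')
    (i : Fin f) : E.pstate φ (X ++ Z) i ≤ E.pstate φ (X' ++ Z) i := by
  have hk := E.aux_pstate_le φ (X ++ Z) i
  rw [← E.aux_pstate φ (X' ++ Z) i hk]
  have h1 := (E.aux_pstate φ (X ++ Z) i hk).2 le_rfl
  generalize E.pstate φ (X ++ Z) i = k at *
  rw [E.aux_le_append] at h1 ⊢
  obtain ⟨U, V, hUV, hU, hV⟩ := h1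
  refine ⟨U, V, hUV, ?_, hV⟩
  have hW : φ i = U ++ (V ++ (φ i).drop k) := by
    rw [← List.append_assoc, ← hUV, List.take_append_drop]
  have hl : U.length ≤ (φ i).length := by rw [hW]; simp
  have ht : (φ i).take U.length = U := by rw [hW]; simp
  rw [← ht] at hU ⊢
  rw [E.aux_pstate φ _ i (by simpa using hl)] at hU ⊢
  rwa [← h]

theorem aux_pstate_append {X X' : List A} (Z : List A) (h : E.pstate φ X = E.pstate φ X') :
    E.pstate φ (X ++ Z) = E.pstate φ (X' ++ Z) :=
  funext fun i => Nat.le_antisymm (E.aux_pstate_append_le φ Z h i)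
    (E.aux_pstate_append_le φ Z h.symm i)

theorem aux_sstate_append_le {Y Y' : List A} (Z : List A) (h : E.sstate φ Y = E.sstate φ Y')
    (i : Fin f) : E.sstate φ (Z ++ Y) i ≤ E.sstate φ (Z ++ Y') i := by
  have hk := E.aux_sstate_le φ (Z ++ Y) i
  obtain ⟨k, hk1, hk2⟩ : ∃ k, k ≤ (φ i).length ∧ E.sstate φ (Z ++ Y) i = (φ i).length - k :=
    ⟨(φ i).length - E.sstate φ (Z ++ Y) i, by omega, by omega⟩
  rw [hk2, ← E.aux_sstate φ (Z ++ Y') i hk1]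
  have h1 := (E.aux_sstate φ (Z ++ Y) i hk1).2 hk2.ge
  rw [E.aux_le_append] at h1 ⊢
  obtain ⟨U, V, hUV, hU, hV⟩ := h1
  refine ⟨U, V, hUV, hU, ?_⟩
  have hW : φ i = ((φ i).take k ++ U) ++ V := by
    rw [List.append_assoc, ← hUV, List.take_append_drop]
  obtain ⟨T, hT⟩ : ∃ T, φ i = T ++ V := ⟨_, hW⟩
  have hl : T.length ≤ (φ i).length := by rw [hT]; simp
  have ht : (φ i).drop T.length = V := by rw [hT]; simp
  rw [← ht] at hV ⊢
  rw [E.aux_sstate φ _ i hl] at hV ⊢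
  rwa [← h]

theorem aux_sstate_append {Y Y' : List A} (Z : List A) (h : E.sstate φ Y = E.sstate φ Y') :
    E.sstate φ (Z ++ Y) = E.sstate φ (Z ++ Y') :=
  funext fun i => Nat.le_antisymm (E.aux_sstate_append_le φ Z h i)
    (E.aux_sstate_append_le φ Z h.symm i)

theorem aux_loopP (X : List A) (b : A) :
    b ∈ E.stateLoopP φ (E.pstate φ X) ↔ E.pstate φ (X ++ [b]) = E.pstate φ X :=
  ⟨fun h => h X rfl, fun h _ hX => (E.aux_pstate_append φ [b] hX).trans h⟩

theorem aux_loopS (Y : List A) (b : A) :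
    b ∈ E.stateLoopS φ (E.sstate φ Y) ↔ E.sstate φ (b :: Y) = E.sstate φ Y :=
  ⟨fun h => h Y rfl, fun h _ hY => (E.aux_sstate_append φ [b] hY).trans h⟩

theorem aux_II (X Y : List A) :
    (∃ p', E.PSucc φ (E.pstate φ X) p' ∧ ¬ POverlap φ p' (E.sstate φ Y)) ↔
      ∃ b, b ∉ E.stateLoopP φ (E.pstate φ X) ∧ X ++ b :: Y ∈ E.Cset φ := by
  have key : ∀ b, X ++ b :: Y ∈ E.Cset φ ↔
      ¬ POverlap φ (E.pstate φ (X ++ [b])) (E.sstate φ Y) := fun b => by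
    rw [← E.aux_mem_iff]; simp
  constructor
  · rintro ⟨p', ⟨hne, b, hb⟩, ho⟩
    have := hb X rfl
    refine ⟨b, ?_, ?_⟩
    · rw [E.aux_loopP, this]; exact hne.symm
    · rw [key, this]; exact ho
  · rintro ⟨b, hb, hC⟩
    refine ⟨E.pstate φ (X ++ [b]), ⟨?_, b, fun X' h => E.aux_pstate_append φ [b] h⟩,
      (key b).1 hC⟩
    rw [E.aux_loopP] at hb
    exact fun h => hb h.symm

theorem aux_III (X Y : List A) :
    (∃ s', E.SSucc φ (E.sstate φ Y) s' ∧ ¬ POverlap φ (E.pstate φ X) s') ↔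
      ∃ b, b ∉ E.stateLoopS φ (E.sstate φ Y) ∧ X ++ b :: Y ∈ E.Cset φ := by
  constructor
  · rintro ⟨s', ⟨hne, b, hb⟩, ho⟩
    have := hb Y rfl
    refine ⟨b, ?_, ?_⟩
    · rw [E.aux_loopS, this]; exact hne.symm
    · rw [E.aux_mem_iff, this]; exact ho
  · rintro ⟨b, hb, hC⟩
    refine ⟨E.sstate φ (b :: Y), ⟨?_, b, fun Y' h => E.aux_sstate_append φ [b] h⟩,
      (E.aux_mem_iff φ _ _).1 hC⟩
    rw [E.aux_loopS] at hb
    exact fun h => hb h.symm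

theorem aux_IV (X Y : List A) :
    (∃ b : A, b ∉ E.stateLoopP φ (E.pstate φ X) ∧
      ∀ X' Y' : List A, E.pstate φ X' = E.pstate φ X → E.sstate φ Y' = E.sstate φ Y →
        (X' ++ b :: Y') ∈ E.Cset φ) ↔
      ∃ b, b ∉ E.stateLoopP φ (E.pstate φ X) ∧ X ++ b :: Y ∈ E.Cset φ := by
  refine exists_congr fun b => and_congr_right fun _ => ⟨fun h => h X Y rfl rfl, ?_⟩
  intro h X' Y' hX hY
  rw [E.aux_mem_iff] at h ⊢
  have hs : E.sstate φ (b :: Y') = E.sstate φ (b :: Y) := E.aux_sstate_append φ [b] hY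
  rwa [hX, hs]

end EmbeddingOrder

/-- **Lemma `lem-match2`.**  Let `p ∈ P` and `s ∈ S` (represented by words
`X₀, Y₀ ∈ C`) be a pair of compatible states with `L_p = coL_s`.  Then the following
are equivalent: (I) `p` and `s` do not match; (II) `p` has a prefix successor
compatible with `s`; (III) `s` has a suffix successor compatible with `p`; (IV) there
is a letter `b ∈ A \ L_p` such that for any word `X` with prefix state `p` and any word
`Y` with suffix state `s`, the word `XbY` is in `C`. -/
theorem match_tfae {A : Type*} [Fintype A] {w : A → ℕ}
    (E : EmbeddingOrder A w) {f : ℕ} (φ : Fin f → List A)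
    (hw : ∀ a, 0 < w a)
    (one : A) (hone : w one = 1) (hone_le : ∀ a : A, E.le [one] [a])
    (hf : 0 < f) (hφne : ∀ i, φ i ≠ [])
    (hφmin : ∀ i ψ, E.le ψ (φ i) → ψ ≠ φ i → ψ ∈ E.Cset φ)
    (hunb : ¬ ∃ M : ℕ, ∀ n : ℕ,
      Set.ncard {W : List A | W ∈ E.Cset φ ∧ EmbeddingOrder.wt w W = n} ≤ M)
    (X₀ Y₀ : List A) (hX₀ : X₀ ∈ E.Cset φ) (hY₀ : Y₀ ∈ E.Cset φ)
    (hcompat : ¬ POverlap φ (E.pstate φ X₀) (E.sstate φ Y₀))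
    (hL : E.stateLoopP φ (E.pstate φ X₀) = E.stateLoopS φ (E.sstate φ Y₀)) :
    ((¬ E.Matches φ (E.pstate φ X₀) (E.sstate φ Y₀)) ↔
        ∃ p', E.PSucc φ (E.pstate φ X₀) p' ∧ ¬ POverlap φ p' (E.sstate φ Y₀)) ∧
    ((¬ E.Matches φ (E.pstate φ X₀) (E.sstate φ Y₀)) ↔
        ∃ s', E.SSucc φ (E.sstate φ Y₀) s' ∧ ¬ POverlap φ (E.pstate φ X₀) s') ∧
    ((¬ E.Matches φ (E.pstate φ X₀) (E.sstate φ Y₀)) ↔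
        ∃ b : A, b ∉ E.stateLoopP φ (E.pstate φ X₀) ∧
          ∀ X Y : List A, E.pstate φ X = E.pstate φ X₀ → E.sstate φ Y = E.sstate φ Y₀ →
            (X ++ b :: Y) ∈ E.Cset φ) := by
  have h2 := E.aux_II φ X₀ Y₀
  have h3 := E.aux_III φ X₀ Y₀
  have h4 := E.aux_IV φ X₀ Y₀
  rw [← hL] at h3
  have hM : (¬ E.Matches φ (E.pstate φ X₀) (E.sstate φ Y₀)) ↔
      (∃ p', E.PSucc φ (E.pstate φ X₀) p' ∧ ¬ POverlap φ p' (E.sstate φ Y₀)) ∨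
      (∃ s', E.SSucc φ (E.sstate φ Y₀) s' ∧ ¬ POverlap φ (E.pstate φ X₀) s') := by
    unfold Matches
    rw [and_iff_right hcompat, not_and_or]
    simp only [not_forall, exists_prop]
  rw [hM, h4, h3, h2, or_self]
  exact ⟨Iff.rfl, Iff.rfl, Iff.rfl⟩
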